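/- arXiv:1504.08345 — 5 statements merged into one kernel-verified Lean document; each statement's English description precedes it below -/
import Mathlib

section
/- Let k ∈ ℕ₀ and n = 4k+1, and for odd m let T_m(t) = Σ_{i=0}^{(m-1)/2} (-1)^i t^{2i+1}/(2i+1)!. Then for all t ∈ [0, √((n+3)(n+4))] one has T_n(t) ≥ T_{n+4}(t) ≥ sin t, and for all t ∈ [−√((n+3)(n+4)), 0] one has T_n(t) ≤ T_{n+4}(t) ≤ sin t. -/
open Finset

/-- Maclaurin polynomial of sin of odd degree `m`:
`T m t = ∑_{i=0}^{(m-1)/2} (-1)^i t^(2i+1)/(2i+1)!`. -/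
noncomputable def sinTaylor (m : ℕ) (t : ℝ) : ℝ :=
  ∑ i ∈ Finset.range ((m - 1) / 2 + 1), (-1 : ℝ) ^ i * t ^ (2 * i + 1) / (2 * i + 1).factorial

/-!
For `t ≥ 0` the partial sums of the sine and cosine series lie alternately above and below the
function: `cos t ≤ 1`, and integrating such an inequality from `0` to `t` passes from cosine to
sine and then from sine to the next partial sum of cosine, with the sign reversed. Since
`sinTaylor (n + 4)` has an odd number of terms, it lies above sine.

The other inequality is a direct computation: with `n = 4k + 1`,
`sinTaylor n t - sinTaylor (n + 4) t = t^(n+2) / (n+2)! * (1 - t² / ((n+3)(n+4)))`,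
which is nonnegative exactly in the stated range. Negative `t` follow because all functions
involved are odd.
-/

/-- The sum of the first `N` terms of the Maclaurin series of sine. -/
noncomputable def sinSum (N : ℕ) (t : ℝ) : ℝ :=
  ∑ i ∈ range N, (-1 : ℝ) ^ i * t ^ (2 * i + 1) / (2 * i + 1).factorial

/-- The sum of the first `N` terms of the Maclaurin series of cosine. -/
noncomputable def cosSum (N : ℕ) (t : ℝ) : ℝ :=
  ∑ i ∈ range N, (-1 : ℝ) ^ i * t ^ (2 * i) / (2 * i).factorial

lemma hasDerivAt_sinSum (N : ℕ) (t : ℝ) : HasDerivAt (sinSum N) (cosSum N t) t := by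
  refine HasDerivAt.fun_sum fun i _ => ?_
  have h := ((hasDerivAt_pow (2 * i + 1) t).const_mul ((-1 : ℝ) ^ i)).div_const
    ((2 * i + 1).factorial : ℝ)
  refine h.congr_deriv ?_
  have := Nat.factorial_pos (2 * i)
  rw [Nat.factorial_succ]
  push_cast
  field_simp

lemma cosSum_succ_eq (N : ℕ) (t : ℝ) :
    cosSum (N + 1) t =
      (∑ i ∈ range N, (-1 : ℝ) ^ (i + 1) * t ^ (2 * i + 2) / (2 * i + 2).factorial) + 1 := by
  simp [cosSum, sum_range_succ', mul_add]

lemma hasDerivAt_cosSum_succ (N : ℕ) (t : ℝ) :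
    HasDerivAt (cosSum (N + 1)) (-sinSum N t) t := by
  rw [funext (cosSum_succ_eq N), sinSum, ← sum_neg_distrib]
  refine HasDerivAt.add_const _ (HasDerivAt.fun_sum fun i _ => ?_)
  have h := ((hasDerivAt_pow (2 * i + 2) t).const_mul ((-1 : ℝ) ^ (i + 1))).div_const
    ((2 * i + 2).factorial : ℝ)
  refine h.congr_deriv ?_
  have := Nat.factorial_pos (2 * i + 1)
  rw [Nat.factorial_succ (2 * i + 1)]
  push_cast
  field_simp
  ring

lemma nonneg_of_deriv_nonneg {f f' : ℝ → ℝ} (hf : ∀ x, HasDerivAt f (f' x) x) (h0 : f 0 = 0)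
    (h : ∀ x, 0 ≤ x → 0 ≤ f' x) {t : ℝ} (ht : 0 ≤ t) : 0 ≤ f t := by
  have hm : MonotoneOn f (Set.Ici 0) :=
    monotoneOn_of_hasDerivWithinAt_nonneg (convex_Ici 0)
      (fun x _ => (hf x).continuousAt.continuousWithinAt)
      (fun x _ => (hf x).hasDerivWithinAt) (fun x hx => h x (interior_subset hx))
  simpa [h0] using hm Set.self_mem_Ici ht ht

lemma sin_sign_of_cos_sign {N : ℕ}
    (h : ∀ t : ℝ, 0 ≤ t → 0 ≤ (-1 : ℝ) ^ N * (Real.cos t - cosSum N t)) :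
    ∀ t : ℝ, 0 ≤ t → 0 ≤ (-1 : ℝ) ^ N * (Real.sin t - sinSum N t) := fun t ht =>
  nonneg_of_deriv_nonneg (f := fun t => (-1 : ℝ) ^ N * (Real.sin t - sinSum N t))
    (fun x => ((Real.hasDerivAt_sin x).sub (hasDerivAt_sinSum N x)).const_mul _)
    (by simp [sinSum]) h ht

/-- The error of the partial sum with `N + 1` terms of the cosine series has the sign of the
first omitted term. -/
lemma cos_sign (N : ℕ) :
    ∀ t : ℝ, 0 ≤ t → 0 ≤ (-1 : ℝ) ^ (N + 1) * (Real.cos t - cosSum (N + 1) t) := by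
  induction N with
  | zero => intro t _; simpa [cosSum] using Real.cos_le_one t
  | succ N ih =>
    intro t ht
    refine nonneg_of_deriv_nonneg
      (f := fun t => (-1 : ℝ) ^ (N + 2) * (Real.cos t - cosSum (N + 2) t))
      (fun x => ((Real.hasDerivAt_cos x).sub (hasDerivAt_cosSum_succ (N + 1) x)).const_mul _)
      (by simp [cosSum_succ_eq]) (fun x hx => ?_) ht
    have := sin_sign_of_cos_sign ih x hx
    rw [pow_succ]
    linarith

lemma sinSum_neg (N : ℕ) (t : ℝ) : sinSum N (-t) = -sinSum N t := by
  rw [sinSum, sinSum, ← sum_neg_distrib]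
  refine sum_congr rfl fun i _ => ?_
  rw [Odd.neg_pow ⟨i, rfl⟩]
  ring

lemma sin_le_sinSum (k : ℕ) {t : ℝ} (ht : 0 ≤ t) : Real.sin t ≤ sinSum (2 * k + 3) t := by
  have := sin_sign_of_cos_sign (cos_sign (2 * k + 2)) t ht
  rw [Odd.neg_one_pow ⟨k + 1, by ring⟩] at this
  linarith

lemma sinSum_le_sinSum (k : ℕ) {t : ℝ} (ht : 0 ≤ t)
    (h : t ^ 2 ≤ (4 * k + 4) * (4 * k + 5)) : sinSum (2 * k + 3) t ≤ sinSum (2 * k + 1) t := by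
  have e : sinSum (2 * k + 1) t - sinSum (2 * k + 3) t =
      t ^ (4 * k + 3) / (4 * k + 3).factorial * (1 - t ^ 2 / ((4 * k + 4) * (4 * k + 5))) := by
    have := Nat.factorial_pos (4 * k + 3)
    have h1 : (-1 : ℝ) ^ (2 * k + 1) = -1 := Odd.neg_one_pow ⟨k, rfl⟩
    have h2 : (-1 : ℝ) ^ (2 * k + 2) = 1 := Even.neg_one_pow ⟨k + 1, by ring⟩
    rw [sinSum, sinSum, sum_range_succ _ (2 * k + 2), sum_range_succ _ (2 * k + 1), h1, h2,
      show 2 * (2 * k + 1) + 1 = 4 * k + 3 by ring,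
      show 2 * (2 * k + 2) + 1 = 4 * k + 3 + 1 + 1 by ring,
      Nat.factorial_succ (4 * k + 3 + 1), Nat.factorial_succ (4 * k + 3)]
    push_cast
    rw [show (4 * k + 3 + 1 + 1 : ℝ) = 4 * k + 5 by ring,
      show (4 * k + 3 + 1 : ℝ) = 4 * k + 4 by ring]
    field_simp
    ring
  have h1 : t ^ 2 / ((4 * k + 4) * (4 * k + 5)) ≤ 1 := div_le_one_of_le₀ h (by positivity)
  have : 0 ≤ t ^ (4 * k + 3) / (4 * k + 3).factorial *
      (1 - t ^ 2 / ((4 * k + 4) * (4 * k + 5))) :=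
    mul_nonneg (by positivity) (by linarith)
  linarith

theorem stmt_0 (k : ℕ) (n : ℕ) (hn : n = 4 * k + 1) :
    (∀ t ∈ Set.Icc (0 : ℝ) (Real.sqrt (((n : ℝ) + 3) * ((n : ℝ) + 4))),
      sinTaylor n t ≥ sinTaylor (n + 4) t ∧ sinTaylor (n + 4) t ≥ Real.sin t) ∧
    (∀ t ∈ Set.Icc (-Real.sqrt (((n : ℝ) + 3) * ((n : ℝ) + 4))) (0 : ℝ),
      sinTaylor n t ≤ sinTaylor (n + 4) t ∧ sinTaylor (n + 4) t ≤ Real.sin t) := by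
  have e1 : sinTaylor n = sinSum (2 * k + 1) := by
    funext t
    rw [sinTaylor, sinSum, show (n - 1) / 2 + 1 = 2 * k + 1 by omega]
  have e2 : sinTaylor (n + 4) = sinSum (2 * k + 3) := by
    funext t
    rw [sinTaylor, sinSum, show (n + 4 - 1) / 2 + 1 = 2 * k + 3 by omega]
  have key : ∀ t ∈ Set.Icc (0 : ℝ) (Real.sqrt (((n : ℝ) + 3) * ((n : ℝ) + 4))),
      sinTaylor n t ≥ sinTaylor (n + 4) t ∧ sinTaylor (n + 4) t ≥ Real.sin t := by
    rintro t ⟨h0, h1⟩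
    rw [e1, e2]
    refine ⟨sinSum_le_sinSum k h0 ?_, sin_le_sinSum k h0⟩
    have h2 := (Real.le_sqrt h0 (by positivity)).1 h1
    rw [hn] at h2
    push_cast at h2
    linarith
  refine ⟨key, fun t ht => ?_⟩
  have := key (-t) ⟨by linarith [ht.2], by linarith [ht.1]⟩
  rw [e1, e2, sinSum_neg, sinSum_neg, Real.sin_neg] at this
  rw [e1, e2]
  exact ⟨by linarith [this.1], by linarith [this.2]⟩
end

section
/- Let n, m ≥ 1 be natural numbers, both even. Then for every real x, (cos x)^n · (sin x)^m = (1/2^{n+m-1}) · ( Σ_{k=0}^{(n+m)/2 - 1} (-1)^{m/2 + k} · ( Σ_{r=0}^{k} (-1)^r C(n,r) C(m,k-r) ) · cos((n+m-2k)x) + (1/2) · (-1)^{m + n/2} · Σ_{r=0}^{(n+m)/2} (-1)^r C(n,r) C(m,(n+m)/2 - r) ). -/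
/-!
Put `z = exp (ix)`, so `2 cos x = z + z⁻¹` and `2i sin x = z - z⁻¹`. Expanding
`(z + z⁻¹)^n (z - z⁻¹)^m` by the binomial theorem and collecting the monomials `z^(n+m-2k)` gives
the coefficient `c k = ∑_{r+s=k} (-1)^s C(n,r) C(m,s)` (`coef`). Since `i^m = (-1)^(m/2)`,
comparing real parts yields
`2^(n+m) (-1)^(m/2) cos^n x sin^m x = ∑_{k ≤ n+m} c k cos ((n+m-2k)x)` (`cos_pow_mul_sin_pow`).
For `m` even the coefficients are palindromic, `c (n+m-k) = c k` (`coef_reflect`), and cosine is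
even, so the terms `k` and `n+m-k` agree: twice the first half of the sum plus the middle term
remains.
-/

open Finset

/-- The coefficient of `X^k` in `(1 + X)^n (1 - X)^m`. The sum runs over the full rectangle of
indices, which makes the symmetry `(r, s) ↦ (n - r, m - s)` directly available. -/
noncomputable def coef (n m k : ℕ) : ℝ :=
  ∑ r ∈ range (n + 1), ∑ s ∈ range (m + 1),
    if r + s = k then (-1 : ℝ) ^ s * n.choose r * m.choose s else 0

lemma coef_eq (n m k : ℕ) :
    coef n m k = (-1 : ℝ) ^ k *
      ∑ r ∈ range (k + 1), (-1 : ℝ) ^ r * (n.choose r) * (m.choose (k - r)) := by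
  have inner : ∀ r, (∑ s ∈ range (m + 1),
      if r + s = k then (-1 : ℝ) ^ s * n.choose r * m.choose s else 0) =
      if r ≤ k then (-1 : ℝ) ^ k * ((-1 : ℝ) ^ r * n.choose r * m.choose (k - r)) else 0 := by
    intro r
    split_ifs with h
    · obtain ⟨s, rfl⟩ := Nat.exists_eq_add_of_le h
      have hsq : (-1 : ℝ) ^ r * (-1) ^ r = 1 := by rw [← mul_pow]; simp
      simp only [Nat.add_left_cancel_iff, Finset.sum_ite_eq', Nat.add_sub_cancel_left, pow_add]
      split_ifs with hs
      · linear_combination (-((-1 : ℝ) ^ s * n.choose r * m.choose s)) * hsq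
      · simp only [Finset.mem_range, not_lt] at hs
        simp [Nat.choose_eq_zero_of_lt (show m < s by omega)]
    · refine Finset.sum_eq_zero fun s _ => if_neg (by omega)
  unfold coef
  rw [Finset.sum_congr rfl fun r _ => inner r, Finset.mul_sum]
  -- Both sides are sums over `r ≤ min n k`, the remaining terms being zero.
  have h1 := Finset.sum_subset (s₁ := range (n + 1)) (s₂ := range (n + k + 1))
    (f := fun r => if r ≤ k then
      (-1 : ℝ) ^ k * ((-1 : ℝ) ^ r * n.choose r * m.choose (k - r)) else 0)
    (by intro r; simp only [Finset.mem_range]; omega)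
    (by
      intro r _ h
      simp only [Finset.mem_range] at h
      simp [Nat.choose_eq_zero_of_lt (show n < r by omega)])
  have h2 := Finset.sum_subset (s₁ := range (k + 1)) (s₂ := range (n + k + 1))
    (f := fun r => if r ≤ k then
      (-1 : ℝ) ^ k * ((-1 : ℝ) ^ r * n.choose r * m.choose (k - r)) else 0)
    (by intro r; simp only [Finset.mem_range]; omega)
    (by
      intro r _ h
      simp only [Finset.mem_range] at h
      exact if_neg (by omega))
  rw [h1, ← h2]
  refine Finset.sum_congr rfl fun r hr => if_pos ?_
  simp only [Finset.mem_range] at hr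
  omega

lemma coef_reflect (n m k : ℕ) (hm : Even m) (hk : k ≤ n + m) :
    coef n m (n + m - k) = coef n m k := by
  unfold coef
  rw [← Finset.sum_range_reflect]
  refine Finset.sum_congr rfl fun r hr => ?_
  rw [← Finset.sum_range_reflect]
  refine Finset.sum_congr rfl fun s hs => ?_
  simp only [Finset.mem_range] at hr hs
  have e1 : n + 1 - 1 - r = n - r := by omega
  have e2 : m + 1 - 1 - s = m - s := by omega
  have e3 : (-1 : ℝ) ^ (m - s) = (-1) ^ s := by
    rw [neg_one_pow_congr]
    grind
  rw [e1, e2, e3, Nat.choose_symm (by omega), Nat.choose_symm (by omega)]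
  exact if_congr (by omega) rfl rfl

/-- Regrouping a double sum with weights depending only on `r + s` by the value of `r + s`. -/
lemma sum_coef_mul (n m : ℕ) (f : ℕ → ℝ) :
    ∑ k ∈ range (n + m + 1), coef n m k * f k =
      ∑ r ∈ range (n + 1), ∑ s ∈ range (m + 1),
        (-1 : ℝ) ^ s * n.choose r * m.choose s * f (r + s) := by
  unfold coef
  simp only [Finset.sum_mul]
  rw [Finset.sum_comm]
  refine Finset.sum_congr rfl fun r hr => ?_
  rw [Finset.sum_comm]
  refine Finset.sum_congr rfl fun s hs => ?_
  simp only [Finset.mem_range] at hr hs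
  simp only [ite_mul, zero_mul, Finset.sum_ite_eq, Finset.mem_range]
  exact if_pos (by omega)

lemma exp_pow_mul_exp_pow (n r : ℕ) (hr : r ≤ n) (x : ℂ) :
    Complex.exp (-x * Complex.I) ^ r * Complex.exp (x * Complex.I) ^ (n - r) =
      Complex.exp (((n : ℂ) - 2 * r) * x * Complex.I) := by
  rw [← Complex.exp_nat_mul, ← Complex.exp_nat_mul, ← Complex.exp_add, Nat.cast_sub hr]
  congr 1
  ring

lemma cos_pow_mul_sin_pow (n m : ℕ) (hm : Even m) (x : ℝ) :
    2 ^ (n + m) * (-1 : ℝ) ^ (m / 2) * (Real.cos x ^ n * Real.sin x ^ m) =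
      ∑ k ∈ range (n + m + 1), coef n m k * Real.cos (((n : ℝ) + m - 2 * k) * x) := by
  have hc : (2 * Complex.cos x) ^ n = ∑ r ∈ range (n + 1),
      (n.choose r : ℂ) * Complex.exp (((n : ℂ) - 2 * r) * x * Complex.I) := by
    rw [Complex.two_cos, add_comm, add_pow]
    refine Finset.sum_congr rfl fun r hr => ?_
    rw [exp_pow_mul_exp_pow n r (by simpa [Nat.lt_succ_iff] using hr), mul_comm]
  have hs : (2 * Complex.I * Complex.sin x) ^ m = ∑ s ∈ range (m + 1),
      (-1) ^ s * (m.choose s : ℂ) * Complex.exp (((m : ℂ) - 2 * s) * x * Complex.I) := by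
    have : 2 * Complex.I * Complex.sin x =
        -Complex.exp (-x * Complex.I) + Complex.exp (x * Complex.I) := by
      linear_combination Complex.I * Complex.two_sin (x : ℂ) +
        (Complex.exp (-x * Complex.I) - Complex.exp (x * Complex.I)) * Complex.I_sq
    rw [this, add_pow]
    refine Finset.sum_congr rfl fun s hs => ?_
    rw [neg_pow, ← exp_pow_mul_exp_pow m s (by simpa [Nat.lt_succ_iff] using hs)]
    ring
  have hI : Complex.I ^ m = (-1) ^ (m / 2) := by
    obtain ⟨b, rfl⟩ := hm.two_dvd
    rw [pow_mul, Complex.I_sq, Nat.mul_div_cancel_left _ (by norm_num)]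
  have key : ((2 ^ (n + m) * (-1 : ℝ) ^ (m / 2) * (Real.cos x ^ n * Real.sin x ^ m) : ℝ) : ℂ) =
      ∑ r ∈ range (n + 1), ∑ s ∈ range (m + 1),
        (((-1 : ℝ) ^ s * n.choose r * m.choose s : ℝ) : ℂ) *
          Complex.exp (((((n : ℝ) + m - 2 * ((r + s : ℕ) : ℝ)) * x : ℝ) : ℂ) * Complex.I) := by
    have : ((2 ^ (n + m) * (-1 : ℝ) ^ (m / 2) * (Real.cos x ^ n * Real.sin x ^ m) : ℝ) : ℂ) =
        (2 * Complex.cos x) ^ n * (2 * Complex.I * Complex.sin x) ^ m := by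
      push_cast
      rw [mul_pow, mul_pow, mul_pow, hI]
      ring
    rw [this, hc, hs, Finset.sum_mul_sum]
    refine Finset.sum_congr rfl fun r _ => Finset.sum_congr rfl fun s _ => ?_
    have : ((((n : ℝ) + m - 2 * ((r + s : ℕ) : ℝ)) * x : ℝ) : ℂ) * Complex.I =
        ((n : ℂ) - 2 * r) * x * Complex.I + ((m : ℂ) - 2 * s) * x * Complex.I := by
      push_cast
      ring
    rw [this, Complex.exp_add]
    push_cast
    ring
  rw [sum_coef_mul n m fun k => Real.cos (((n : ℝ) + m - 2 * k) * x)]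
  have := congrArg Complex.re key
  simpa only [Complex.ofReal_re, Complex.re_sum, Complex.re_ofReal_mul,
    Complex.exp_ofReal_mul_I_re] using this

/-- A sum over `0, …, 2h` whose terms are symmetric about `h` folds onto its first half. -/
lemma sum_range_fold (h : ℕ) (f : ℕ → ℝ) (hf : ∀ k < h, f (2 * h - k) = f k) :
    ∑ k ∈ range (2 * h + 1), f k = 2 * ∑ k ∈ range h, f k + f h := by
  have : 2 * h + 1 = (h + 1) + h := by ring
  rw [this, Finset.sum_range_add, Finset.sum_range_succ,
    ← Finset.sum_range_reflect (fun j => f (h + 1 + j))]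
  have : ∑ j ∈ range h, f (h + 1 + (h - 1 - j)) = ∑ j ∈ range h, f j := by
    refine Finset.sum_congr rfl fun j hj => ?_
    simp only [Finset.mem_range] at hj
    rw [← hf j hj]
    congr 1
    omega
  rw [this]
  ring

theorem stmt_11 (n m : ℕ) (hn : Even n) (hm : Even m) (hn1 : 1 ≤ n) (hm1 : 1 ≤ m) (x : ℝ) :
    Real.cos x ^ n * Real.sin x ^ m =
      (1 / 2 ^ (n + m - 1)) *
        ((∑ k ∈ Finset.range ((n + m) / 2),
          (-1 : ℝ) ^ (m / 2 + k) *
            (∑ r ∈ Finset.range (k + 1),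
              (-1 : ℝ) ^ r * (n.choose r) * (m.choose (k - r))) *
            Real.cos (((n : ℝ) + (m : ℝ) - 2 * k) * x)) +
        (1 / 2) * (-1 : ℝ) ^ (m + n / 2) *
          ∑ r ∈ Finset.range ((n + m) / 2 + 1),
            (-1 : ℝ) ^ r * (n.choose r) * (m.choose ((n + m) / 2 - r))) := by
  have main := cos_pow_mul_sin_pow n m hm x
  obtain ⟨h, hh⟩ : ∃ h, n + m = 2 * h := (hn.add hm).two_dvd
  have hR : (n : ℝ) + m = 2 * h := by exact_mod_cast hh
  have hfold := sum_range_fold h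
    (fun k => coef n m k * Real.cos (((n : ℝ) + m - 2 * k) * x)) (by
      intro k hk
      rw [← hh, coef_reflect n m k hm (by omega), Nat.cast_sub (by omega), ← Real.cos_neg]
      push_cast
      congr 2
      ring)
  rw [hh, hfold] at main
  have hmid : Real.cos (((n : ℝ) + m - 2 * h) * x) = 1 := by simp [hR]
  have hsum : ∑ k ∈ range h, (-1 : ℝ) ^ (m / 2 + k) *
        (∑ r ∈ range (k + 1), (-1 : ℝ) ^ r * (n.choose r) * (m.choose (k - r))) *
        Real.cos (((n : ℝ) + (m : ℝ) - 2 * k) * x) =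
      (-1 : ℝ) ^ (m / 2) *
        ∑ k ∈ range h, coef n m k * Real.cos (((n : ℝ) + m - 2 * k) * x) := by
    rw [Finset.mul_sum]
    refine Finset.sum_congr rfl fun k _ => ?_
    rw [coef_eq, pow_add]
    ring
  -- `m + n / 2 = m / 2 + h`, so the sign of the constant term has the same form as the others.
  have hsign : m + n / 2 = m / 2 + h := by grind
  have hsq : (-1 : ℝ) ^ (m / 2) * (-1) ^ (m / 2) = 1 := by rw [← mul_pow]; simp
  have hpow : (2 : ℝ) ^ (2 * h) = 2 * 2 ^ (2 * h - 1) := by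
    rw [← pow_succ']
    congr 1
    omega
  have hdiv : (n + m) / 2 = h := by omega
  have hne : (2 : ℝ) ^ (2 * h - 1) ≠ 0 := by positivity
  have hcoef := coef_eq n m h
  rw [hmid, hpow] at main
  rw [hdiv, hsum, hsign, pow_add, hh, one_div_mul_eq_div, eq_div_iff hne]
  linear_combination (1 / 2) * (-1 : ℝ) ^ (m / 2) * main + (1 / 2) * (-1 : ℝ) ^ (m / 2) * hcoef -
    2 ^ (2 * h - 1) * (Real.cos x ^ n * Real.sin x ^ m) * hsq
end

section
/- For every real x with 0 < x < π/2, the inequality (x / sin x)² + x / tan x < 2 + (2/45) x⁴ + (8/945) x⁵ tan x holds. -/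
open Real

/-!
Multiplying by `sin² x cos x > 0` turns the claim into
`x² cos x + x sin x cos² x < sin² x cos x (2 + 2x⁴/45) + (8/945) x⁵ sin³ x`.
Each side is monotone in nonnegative powers of `sin x` and `cos x`, so it suffices to insert Taylor
bounds: degrees `7` and `9` for the sine, `6` and `8` for the cosine. The difference then becomes a
polynomial of the form `x¹⁰ P(x²)` with `deg P = 8`. All lower powers cancel because both sides of
the theorem expand as `2 + 2x⁴/45 + 8x⁶/945 + O(x⁸)` at `0`, and `sin² x cos x` contributes the
factor `x²`. On the range `x² < 5/2` the linear part of `P` is already bounded below by a positive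
constant, which dominates the negative higher-order terms.
-/

lemma nonneg_of_deriv_nonneg_on_nonneg {f f' : ℝ → ℝ} (hf : ∀ x, HasDerivAt f (f' x) x)
    (h0 : f 0 = 0) (hf' : ∀ x, 0 ≤ x → 0 ≤ f' x) (x : ℝ) (hx : 0 ≤ x) : 0 ≤ f x := by
  have hmono : MonotoneOn f (Set.Ici 0) := by
    apply monotoneOn_of_deriv_nonneg (convex_Ici 0)
    · exact fun x _ => (hf x).continuousAt.continuousWithinAt
    · exact fun x _ => (hf x).differentiableAt.differentiableWithinAt
    · intro x hx
      rw [interior_Ici] at hx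
      rw [(hf x).deriv]
      exact hf' x (le_of_lt hx)
  have := hmono (Set.mem_Ici.2 le_rfl) (Set.mem_Ici.2 hx) hx
  rwa [h0] at this

/-- A bound on the cosine integrates to a bound on the sine; `σ` is a sign choosing the
direction. -/
lemma sin_step {p q : ℝ → ℝ} (σ : ℝ) (hp : ∀ x, HasDerivAt p (q x) x) (h0 : p 0 = 0)
    (hq : ∀ x, 0 ≤ x → 0 ≤ σ * (cos x - q x)) (x : ℝ) (hx : 0 ≤ x) :
    0 ≤ σ * (sin x - p x) :=
  nonneg_of_deriv_nonneg_on_nonneg (f := fun x => σ * (sin x - p x))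
    (fun x => ((hasDerivAt_sin x).sub (hp x)).const_mul σ) (by simp [h0]) hq x hx

/-- A bound on the sine integrates to the opposite bound on the cosine. -/
lemma cos_step {p q : ℝ → ℝ} (σ : ℝ) (hp : ∀ x, HasDerivAt p (-q x) x) (h0 : p 0 = 1)
    (hq : ∀ x, 0 ≤ x → 0 ≤ σ * (sin x - q x)) (x : ℝ) (hx : 0 ≤ x) :
    0 ≤ -σ * (cos x - p x) :=
  nonneg_of_deriv_nonneg_on_nonneg (f := fun x => -σ * (cos x - p x))
    (fun x => ((hasDerivAt_cos x).sub (hp x)).const_mul (-σ)) (by simp [h0])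
    (fun x hx => by have := hq x hx; linarith) x hx

lemma sin_cos_taylor_bounds (x : ℝ) (hx : 0 ≤ x) :
    x - x ^ 3 / 6 + x ^ 5 / 120 - x ^ 7 / 5040 ≤ sin x ∧
    sin x ≤ x - x ^ 3 / 6 + x ^ 5 / 120 - x ^ 7 / 5040 + x ^ 9 / 362880 ∧
    1 - x ^ 2 / 2 + x ^ 4 / 24 - x ^ 6 / 720 ≤ cos x ∧
    cos x ≤ 1 - x ^ 2 / 2 + x ^ 4 / 24 - x ^ 6 / 720 + x ^ 8 / 40320 := by
  have s1 : ∀ x : ℝ, 0 ≤ x → 0 ≤ (-1) * (sin x - x) :=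
    fun x hx => by linarith [sin_le hx]
  have c2 := cos_step (p := fun x => 1 - x ^ 2 / 2) (-1) (fun x => by
    refine (((hasDerivAt_id x).pow 2).div_const 2 |>.const_sub 1).congr_deriv ?_
    simp) (by simp) s1
  have s3 := sin_step (p := fun x => x - x ^ 3 / 6) (- -1) (fun x => by
    refine ((hasDerivAt_id x).sub ((hasDerivAt_pow 3 x).div_const 6)).congr_deriv ?_
    norm_num; ring) (by simp) c2
  have c4 := cos_step (p := fun x => 1 - x ^ 2 / 2 + x ^ 4 / 24) (- -1) (fun x => by
    refine ((((hasDerivAt_pow 2 x).div_const 2).const_sub 1).add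
      ((hasDerivAt_pow 4 x).div_const 24)).congr_deriv ?_
    norm_num; ring) (by simp) s3
  have s5 := sin_step (p := fun x => x - x ^ 3 / 6 + x ^ 5 / 120) (- - -1) (fun x => by
    refine (((hasDerivAt_id x).sub ((hasDerivAt_pow 3 x).div_const 6)).add
      ((hasDerivAt_pow 5 x).div_const 120)).congr_deriv ?_
    norm_num; ring) (by simp) c4
  have c6 := cos_step (p := fun x => 1 - x ^ 2 / 2 + x ^ 4 / 24 - x ^ 6 / 720) (- - -1)
    (fun x => by
    refine (((((hasDerivAt_pow 2 x).div_const 2).const_sub 1).add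
      ((hasDerivAt_pow 4 x).div_const 24)).sub
      ((hasDerivAt_pow 6 x).div_const 720)).congr_deriv ?_
    norm_num; ring) (by simp) s5
  have s7 := sin_step (p := fun x => x - x ^ 3 / 6 + x ^ 5 / 120 - x ^ 7 / 5040) (- - - -1)
    (fun x => by
    refine ((((hasDerivAt_id x).sub ((hasDerivAt_pow 3 x).div_const 6)).add
      ((hasDerivAt_pow 5 x).div_const 120)).sub
      ((hasDerivAt_pow 7 x).div_const 5040)).congr_deriv ?_
    norm_num; ring) (by simp) c6
  have c8 := cos_step
    (p := fun x => 1 - x ^ 2 / 2 + x ^ 4 / 24 - x ^ 6 / 720 + x ^ 8 / 40320) (- - - -1)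
    (fun x => by
    refine ((((((hasDerivAt_pow 2 x).div_const 2).const_sub 1).add
      ((hasDerivAt_pow 4 x).div_const 24)).sub
      ((hasDerivAt_pow 6 x).div_const 720)).add
      ((hasDerivAt_pow 8 x).div_const 40320)).congr_deriv ?_
    norm_num; ring) (by simp) s7
  have s9 := sin_step
    (p := fun x => x - x ^ 3 / 6 + x ^ 5 / 120 - x ^ 7 / 5040 + x ^ 9 / 362880) (- - - - -1)
    (fun x => by
    refine (((((hasDerivAt_id x).sub ((hasDerivAt_pow 3 x).div_const 6)).add
      ((hasDerivAt_pow 5 x).div_const 120)).sub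
      ((hasDerivAt_pow 7 x).div_const 5040)).add
      ((hasDerivAt_pow 9 x).div_const 362880)).congr_deriv ?_
    norm_num; ring) (by simp) c8
  have h1 := s7 x hx
  have h2 := s9 x hx
  have h3 := c6 x hx
  have h4 := c8 x hx
  refine ⟨by linarith, by linarith, by linarith, by linarith⟩

/-- Positivity of the polynomial `P` of the Taylor remainder, in the variable `y = x²`. -/
lemma remainder_poly_pos (y : ℝ) (h0 : 0 < y) (h1 : y < 5 / 2) :
    0 < 451/302400 - 283/907200 * y + 8023/326592000 * y ^ 2 - 451/914457600 * y ^ 3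
      - 4769/73156608000 * y ^ 4 + 96413/15362887680000 * y ^ 5
      - 9931/36870930432000 * y ^ 6 + 2291/368709304320000 * y ^ 7
      - 4201/61943163125760000 * y ^ 8 := by
  have e3 : y ^ 3 ≤ (5 / 2) ^ 3 := pow_le_pow_left₀ h0.le h1.le 3
  have e4 : y ^ 4 ≤ (5 / 2) ^ 4 := pow_le_pow_left₀ h0.le h1.le 4
  have e6 : y ^ 6 ≤ (5 / 2) ^ 6 := pow_le_pow_left₀ h0.le h1.le 6
  have e8 : y ^ 8 ≤ (5 / 2) ^ 8 := pow_le_pow_left₀ h0.le h1.le 8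
  have e2 : 0 < y ^ 2 := by positivity
  have e5 : 0 < y ^ 5 := by positivity
  have e7 : 0 < y ^ 7 := by positivity
  norm_num at e3 e4 e6 e8
  linarith

/-- The inequality cleared of denominators. -/
lemma cleared_inequality (x : ℝ) (hx0 : 0 < x) (hx : x < π / 2) :
    x ^ 2 * cos x + x * sin x * cos x ^ 2 <
      sin x ^ 2 * cos x * (2 + 2 / 45 * x ^ 4) + 8 / 945 * x ^ 5 * sin x ^ 3 := by
  obtain ⟨hs1, hs2, hc1, hc2⟩ := sin_cos_taylor_bounds x hx0.le
  have hc : 0 < cos x := cos_pos_of_mem_Ioo ⟨by linarith, hx⟩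
  have hs : 0 < sin x := sin_pos_of_pos_of_lt_pi hx0 (by linarith)
  have hy : x ^ 2 < 5 / 2 := by
    have : x < 1.58 := by linarith [pi_lt_d2]
    nlinarith
  have ha : 0 ≤ x - x ^ 3 / 6 + x ^ 5 / 120 - x ^ 7 / 5040 := by
    have e : x - x ^ 3 / 6 + x ^ 5 / 120 - x ^ 7 / 5040
        = x * ((1 - x ^ 2 / 6) + (x ^ 2) ^ 2 / 120 * (1 - x ^ 2 / 42)) := by ring
    have : 0 ≤ 1 - x ^ 2 / 6 := by linarith
    have : 0 ≤ 1 - x ^ 2 / 42 := by linarith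
    rw [e]
    positivity
  have hP := mul_pos (pow_pos hx0 10) (remainder_poly_pos (x ^ 2) (by positivity) hy)
  set a := x - x ^ 3 / 6 + x ^ 5 / 120 - x ^ 7 / 5040 with ea
  set A := a + x ^ 9 / 362880 with eA
  set b := 1 - x ^ 2 / 2 + x ^ 4 / 24 - x ^ 6 / 720 with eb
  set B := b + x ^ 8 / 40320 with eB
  have k1 : a ^ 2 * b ≤ sin x ^ 2 * cos x :=
    (mul_le_mul_of_nonneg_left hc1 (sq_nonneg a)).trans
      (mul_le_mul_of_nonneg_right (pow_le_pow_left₀ ha hs1 2) hc.le)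
  have k2 : a ^ 3 ≤ sin x ^ 3 := pow_le_pow_left₀ ha hs1 3
  have k3 : x * sin x * cos x ^ 2 ≤ x * A * B ^ 2 := by gcongr
  have k4 : x ^ 2 * cos x ≤ x ^ 2 * B := by gcongr
  have k5 : a ^ 2 * b * (2 + 2 / 45 * x ^ 4) ≤ sin x ^ 2 * cos x * (2 + 2 / 45 * x ^ 4) := by
    gcongr
  have k6 : 8 / 945 * x ^ 5 * a ^ 3 ≤ 8 / 945 * x ^ 5 * sin x ^ 3 := by gcongr
  have k7 : x ^ 2 * B + x * A * B ^ 2 <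
      a ^ 2 * b * (2 + 2 / 45 * x ^ 4) + 8 / 945 * x ^ 5 * a ^ 3 := by
    rw [← sub_pos]
    refine hP.trans_eq ?_
    rw [eA, eB, ea, eb]
    ring
  linarith

theorem stmt_17 (x : ℝ) (hx0 : 0 < x) (hx : x < π / 2) :
    (x / sin x) ^ 2 + x / tan x < 2 + (2 / 45) * x ^ 4 + (8 / 945) * x ^ 5 * tan x := by
  have hc : 0 < cos x := cos_pos_of_mem_Ioo ⟨by linarith, hx⟩
  have hs : 0 < sin x := sin_pos_of_pos_of_lt_pi hx0 (by linarith)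
  have h := cleared_inequality x hx0 hx
  have hd : 0 < sin x ^ 2 * cos x := by positivity
  rw [tan_eq_sin_div_cos]
  refine lt_of_mul_lt_mul_right ?_ hd.le
  calc ((x / sin x) ^ 2 + x / (sin x / cos x)) * (sin x ^ 2 * cos x)
      = x ^ 2 * cos x + x * sin x * cos x ^ 2 := by field_simp
    _ < sin x ^ 2 * cos x * (2 + 2 / 45 * x ^ 4) + 8 / 945 * x ^ 5 * sin x ^ 3 := h
    _ = (2 + (2 / 45) * x ^ 4 + (8 / 945) * x ^ 5 * (sin x / cos x)) * (sin x ^ 2 * cos x) := by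
      field_simp
end

section
/- For every real x with 0 < x < π/2, the inequality ((2π⁴/3)·x³ + (8π⁴/15 − 16π²/3)·x⁵) / (π² − 4x²)² < x/(cos x)² − tan x holds. -/
open Real

/-!
By the Mittag-Leffler expansion `tan x = ∑ 8 x / (m² π² - 4 x²)`, the sum running over the odd
`m = 2 k + 1`, differentiation term by term gives
`x / cos² x - tan x = x² (tan x / x)' = 64 x³ ∑ 1 / (m² π² - 4 x²)²` (`hasSum_main`).
Multiply by `(π² - 4 x²)² / (64 x³)` and put `X = 4 x²`, `P = π²`, `M = m²`. Each term
`((P - X) / (M P - X))²` is a convex function of `X` on `[0, P]`, so it lies above its tangent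
at `X = 0`, strictly unless `m = 1` (`term_bound`). Summing these tangents with
`∑ 1 / m⁴ = π⁴ / 96` and `∑ 1 / m⁶ = π⁶ / 960` gives exactly the numerator of the left-hand side.
-/

/-- The Mittag-Leffler expansion of the cotangent, in real form on `(0, 1)`. -/
lemma hasSum_cot_real {z : ℝ} (h0 : 0 < z) (h1 : z < 1) :
    HasSum (fun n : ℕ => 2 * z / (z ^ 2 - ((n : ℝ) + 1) ^ 2))
      (π * (cos (π * z) / sin (π * z)) - 1 / z) := by
  have hz : (z : ℂ) ∈ Complex.integerComplement := by
    rintro ⟨n, hn⟩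
    have hn' : (n : ℝ) = z := by exact_mod_cast hn
    rw [← hn'] at h0 h1
    have a : 0 < n := by exact_mod_cast h0
    have b : n < 1 := by exact_mod_cast h1
    omega
  have hs := (summable_cotTerm hz).hasSum
  rw [← cot_series_rep' hz] at hs
  rw [← Complex.hasSum_ofReal]
  convert! hs using 1
  · funext n
    rw [cotTerm_identity hz]
    push_cast
    rw [mul_one_div]
    congr 1
    ring
  · push_cast
    rw [Complex.cot_eq_cos_div_sin]

/-- The partial fraction expansion of the tangent. It follows from that of the cotangent through
`tan x = cot x - 2 cot (2 x)`: the even poles cancel and the odd ones remain. -/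
lemma hasSum_tan {x : ℝ} (hx0 : 0 < x) (hx : x < π / 2) :
    HasSum (fun k : ℕ => 8 * x / ((2 * (k : ℝ) + 1) ^ 2 * π ^ 2 - 4 * x ^ 2)) (tan x) := by
  have hpi := pi_pos
  obtain ⟨z, rfl⟩ : ∃ z, x = π * z := ⟨x / π, by field_simp⟩
  have hz0 : 0 < z := by
    by_contra! h
    nlinarith
  have hz1 : z < 1 / 2 := by
    by_contra! h
    nlinarith
  have hc : 0 < cos (π * z) := cos_pos_of_mem_Ioo ⟨by linarith, hx⟩
  have hs : 0 < sin (π * z) := sin_pos_of_pos_of_lt_pi hx0 (by linarith)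
  have h1 := hasSum_cot_real hz0 (by linarith)
  have h2 := hasSum_cot_real (z := 2 * z) (by linarith) (by linarith)
  have hE : Summable (fun k : ℕ =>
      2 * (2 * z) / ((2 * z) ^ 2 - (((2 * k : ℕ) : ℝ) + 1) ^ 2)) :=
    h2.summable.comp_injective (i := fun k : ℕ => 2 * k) (fun a b h => by simpa using h)
  have hO : HasSum (fun k : ℕ =>
      2 * (2 * z) / ((2 * z) ^ 2 - (((2 * k + 1 : ℕ) : ℝ) + 1) ^ 2))
      (1 / 2 * (π * (cos (π * z) / sin (π * z)) - 1 / z)) := by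
    convert! h1.mul_left (1 / 2) using 1
    funext k
    have : z ^ 2 - ((k : ℝ) + 1) ^ 2 ≠ 0 := by
      have : (0 : ℝ) ≤ k := k.cast_nonneg
      nlinarith
    push_cast
    rw [show (2 * z) ^ 2 - (2 * (k : ℝ) + 1 + 1) ^ 2 = 4 * (z ^ 2 - ((k : ℝ) + 1) ^ 2) by ring]
    field_simp
    norm_num
  have hsum := (hE.hasSum.even_add_odd
    (f := fun n : ℕ => 2 * (2 * z) / ((2 * z) ^ 2 - ((n : ℝ) + 1) ^ 2)) hO).unique h2
  have hE' := hE.hasSum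
  rw [eq_sub_of_add_eq hsum] at hE'
  convert! hE'.mul_left (-2 / π) using 1
  · funext k
    have hk : (0 : ℝ) ≤ k := k.cast_nonneg
    have h3 : (2 * (k : ℝ) + 1) ^ 2 - 4 * z ^ 2 ≠ 0 := by nlinarith
    have h4 : (2 * z) ^ 2 - (2 * (k : ℝ) + 1) ^ 2 ≠ 0 := by nlinarith
    push_cast
    rw [show (2 * (k : ℝ) + 1) ^ 2 * π ^ 2 - 4 * (π * z) ^ 2
      = π ^ 2 * ((2 * (k : ℝ) + 1) ^ 2 - 4 * z ^ 2) by ring]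
    rw [show (2 * z) ^ 2 - (2 * (k : ℝ) + 1) ^ 2 = -((2 * (k : ℝ) + 1) ^ 2 - 4 * z ^ 2) by ring]
    field_simp
    norm_num
  · rw [show π * (2 * z) = 2 * (π * z) by ring, cos_two_mul, sin_two_mul, tan_eq_sin_div_cos]
    have := sin_sq_add_cos_sq (π * z)
    field_simp
    linear_combination (π * z) * this

lemma summable_odd_sq : Summable (fun k : ℕ => 1 / (2 * (k : ℝ) + 1) ^ 2) := by
  have := (hasSum_zeta_two.summable).comp_injective (i := fun k : ℕ => 2 * k + 1)
    (fun a b h => by simpa using h)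
  simpa [Function.comp_def] using this

/-- The even integers contribute the fraction `1 / 2 ^ p` of `∑ 1 / n ^ p`; the odd ones give the
rest. -/
lemma hasSum_odd {p : ℕ} {s : ℝ} (h : HasSum (fun n : ℕ => 1 / (n : ℝ) ^ p) s) :
    HasSum (fun k : ℕ => 1 / (2 * (k : ℝ) + 1) ^ p) (s - s / 2 ^ p) := by
  have hO := (h.summable.comp_injective (i := fun k : ℕ => 2 * k + 1)
    (fun a b h => by simpa using h)).hasSum
  have hE : HasSum (fun k : ℕ => 1 / ((2 * k : ℕ) : ℝ) ^ p) (s / 2 ^ p) := by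
    convert! h.div_const (2 ^ p) using 1
    funext k
    push_cast
    rw [mul_pow, div_div, mul_comm]
  have hsum := (hE.even_add_odd (f := fun n : ℕ => 1 / (n : ℝ) ^ p) hO).unique h
  rw [eq_sub_of_add_eq' hsum] at hO
  simpa [Function.comp_def] using hO

lemma hasSum_odd_four : HasSum (fun k : ℕ => 1 / (2 * (k : ℝ) + 1) ^ 4) (π ^ 4 / 96) := by
  convert! hasSum_odd hasSum_zeta_four using 1
  ring

lemma bernoulli'_five_six : bernoulli' 5 = 0 ∧ bernoulli' 6 = 1 / 42 := by
  have h5 : bernoulli' 5 = 0 := by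
    rw [bernoulli'_def]
    norm_num [Finset.sum_range_succ, Nat.choose]
  refine ⟨h5, ?_⟩
  rw [bernoulli'_def]
  norm_num [Finset.sum_range_succ, Nat.choose, h5]

lemma hasSum_odd_six : HasSum (fun k : ℕ => 1 / (2 * (k : ℝ) + 1) ^ 6) (π ^ 6 / 960) := by
  have h : HasSum (fun n : ℕ => 1 / (n : ℝ) ^ 6) (π ^ 6 / 945) := by
    convert! hasSum_zeta_nat (k := 3) (by norm_num) using 1
    simp only [Nat.reduceMul]
    rw [bernoulli_eq_bernoulli'_of_ne_one (by norm_num), bernoulli'_five_six.2]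
    simp [Nat.factorial]
    ring
  convert! hasSum_odd h using 1
  ring

/-- The expansion of `x² (tan x / x)' = x / cos² x - tan x`, obtained by differentiating the
partial fractions of the tangent term by term. -/
lemma hasSum_main {x : ℝ} (hx0 : 0 < x) (hx : x < π / 2) :
    HasSum (fun k : ℕ => 64 * x ^ 3 / ((2 * (k : ℝ) + 1) ^ 2 * π ^ 2 - 4 * x ^ 2) ^ 2)
      (x / cos x ^ 2 - tan x) := by
  have hpi := pi_pos
  -- The derivative of the term `k = 0` is unbounded near `π / 2`: work below some `c < π / 2`.
  obtain ⟨c, hxc, hc⟩ := exists_between hx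
  have hc0 : 0 < c := hx0.trans hxc
  set d : ℝ := π ^ 2 - 4 * c ^ 2 with hd_def
  have hd : 0 < d := by nlinarith
  have key : ∀ (k : ℕ) (y : ℝ), y ∈ Set.Ioo 0 c →
      (2 * (k : ℝ) + 1) ^ 2 * d ≤ (2 * (k : ℝ) + 1) ^ 2 * π ^ 2 - 4 * y ^ 2 := by
    intro k y hy
    have hk : (0 : ℝ) ≤ k := k.cast_nonneg
    have hm : 1 ≤ (2 * (k : ℝ) + 1) ^ 2 := by nlinarith
    have hyc : y ^ 2 ≤ c ^ 2 := by nlinarith [hy.1, hy.2]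
    nlinarith [mul_nonneg (sub_nonneg.2 hm) (sq_nonneg c)]
  have keypos : ∀ (k : ℕ) (y : ℝ), y ∈ Set.Ioo 0 c →
      0 < (2 * (k : ℝ) + 1) ^ 2 * π ^ 2 - 4 * y ^ 2 := fun k y hy =>
    lt_of_lt_of_le (by positivity) (key k y hy)
  have hsum_u : Summable (fun k : ℕ => 16 * π ^ 2 / d ^ 2 * (1 / (2 * (k : ℝ) + 1) ^ 2)) :=
    summable_odd_sq.mul_left _
  have hbound : ∀ (k : ℕ) (y : ℝ), y ∈ Set.Ioo 0 c →
      ‖(8 * (2 * (k : ℝ) + 1) ^ 2 * π ^ 2 + 32 * y ^ 2) /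
        ((2 * (k : ℝ) + 1) ^ 2 * π ^ 2 - 4 * y ^ 2) ^ 2‖
        ≤ 16 * π ^ 2 / d ^ 2 * (1 / (2 * (k : ℝ) + 1) ^ 2) := by
    intro k y hy
    have hp := keypos k y hy
    have hk := key k y hy
    have hm : 0 < (2 * (k : ℝ) + 1) ^ 2 := by positivity
    rw [Real.norm_of_nonneg (by positivity)]
    have e : 16 * π ^ 2 / d ^ 2 * (1 / (2 * (k : ℝ) + 1) ^ 2)
        = (16 * (2 * (k : ℝ) + 1) ^ 2 * π ^ 2) / ((2 * (k : ℝ) + 1) ^ 2 * d) ^ 2 := by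
      field_simp
    rw [e]
    apply div_le_div₀ (by positivity) _ (by positivity) (by gcongr)
    linarith
  have hderiv : ∀ (k : ℕ) (y : ℝ), y ∈ Set.Ioo 0 c →
      HasDerivAt (fun y : ℝ => 8 * y / ((2 * (k : ℝ) + 1) ^ 2 * π ^ 2 - 4 * y ^ 2))
        ((8 * (2 * (k : ℝ) + 1) ^ 2 * π ^ 2 + 32 * y ^ 2) /
        ((2 * (k : ℝ) + 1) ^ 2 * π ^ 2 - 4 * y ^ 2) ^ 2) y := by
    intro k y hy
    have hp := keypos k y hy
    have hn : HasDerivAt (fun y : ℝ => 8 * y) 8 y := by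
      simpa using (hasDerivAt_id y).const_mul 8
    have hde : HasDerivAt (fun y : ℝ => (2 * (k : ℝ) + 1) ^ 2 * π ^ 2 - 4 * y ^ 2)
        (-(4 * (2 * y))) y := by
      simpa using ((hasDerivAt_pow 2 y).const_mul 4).const_sub ((2 * (k : ℝ) + 1) ^ 2 * π ^ 2)
    convert! hn.div hde hp.ne' using 1
    ring
  have hxm : x ∈ Set.Ioo 0 c := ⟨hx0, hxc⟩
  have hD := hasDerivAt_tsum_of_isPreconnected hsum_u isOpen_Ioo isPreconnected_Ioo
    hderiv hbound hxm (hasSum_tan hx0 hx).summable hxm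
  have hcos : 0 < cos x := cos_pos_of_mem_Ioo ⟨by linarith, hx⟩
  have htan : HasDerivAt (fun z : ℝ => ∑' k : ℕ,
      8 * z / ((2 * (k : ℝ) + 1) ^ 2 * π ^ 2 - 4 * z ^ 2)) (1 / cos x ^ 2) x := by
    refine (hasDerivAt_tan hcos.ne').congr_of_eventuallyEq ?_
    filter_upwards [isOpen_Ioo.mem_nhds hxm] with y hy
    exact (hasSum_tan hy.1 (hy.2.trans hc)).tsum_eq
  have hS : Summable (fun k : ℕ => (8 * (2 * (k : ℝ) + 1) ^ 2 * π ^ 2 + 32 * x ^ 2) /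
        ((2 * (k : ℝ) + 1) ^ 2 * π ^ 2 - 4 * x ^ 2) ^ 2) :=
    Summable.of_norm_bounded hsum_u (fun k => hbound k x hxm)
  have hS' := hS.hasSum
  rw [hD.unique htan] at hS'
  convert! (hS'.mul_left x).sub (hasSum_tan hx0 hx) using 1
  · funext k
    have hp := (keypos k x hxm).ne'
    field_simp
    ring
  · ring

/-- The tangent at `X = 0` to the convex function `X ↦ ((P - X) / (M P - X))²` lies below it,
written after division by `(P - X)²`. -/
lemma term_bound {P X M : ℝ} (hX : 0 < X) (hXP : X < P) (hM : M = 1 ∨ 3 < M) :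
    (1 / M ^ 2 + X / P * (2 * (1 / M ^ 3) - 2 * (1 / M ^ 2))) / (P - X) ^ 2
      ≤ 1 / (M * P - X) ^ 2 ∧
    (3 < M → (1 / M ^ 2 + X / P * (2 * (1 / M ^ 3) - 2 * (1 / M ^ 2))) / (P - X) ^ 2
      < 1 / (M * P - X) ^ 2) := by
  have strict : 3 < M →
      (1 / M ^ 2 + X / P * (2 * (1 / M ^ 3) - 2 * (1 / M ^ 2))) / (P - X) ^ 2
        < 1 / (M * P - X) ^ 2 := by
    intro hM
    have hP : 0 < P := hX.trans hXP
    have hM0 : 0 < M := by linarith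
    have h1 : 0 < P - X := by linarith
    have h2 : 0 < M * P - X := by nlinarith
    rw [← sub_pos]
    have e : 1 / (M * P - X) ^ 2 -
        (1 / M ^ 2 + X / P * (2 * (1 / M ^ 3) - 2 * (1 / M ^ 2))) / (P - X) ^ 2
        = X ^ 2 * (M - 1) * (M * (M - 3) * P + 2 * X) /
          (P * M ^ 3 * (M * P - X) ^ 2 * (P - X) ^ 2) := by
      field_simp
      ring
    rw [e]
    have : 0 < M - 1 := by linarith
    have : 0 < M - 3 := by linarith
    positivity
  refine ⟨?_, strict⟩
  rcases hM with rfl | hM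
  · simp
  · exact (strict hM).le

theorem stmt_18 (x : ℝ) (hx0 : 0 < x) (hx : x < π / 2) :
    ((2 * π ^ 4 / 3) * x ^ 3 + (8 * π ^ 4 / 15 - 16 * π ^ 2 / 3) * x ^ 5) /
        (π ^ 2 - 4 * x ^ 2) ^ 2 <
      x / cos x ^ 2 - tan x := by
  have hpi := pi_pos
  have hX : 0 < 4 * x ^ 2 := by positivity
  have hXP : 4 * x ^ 2 < π ^ 2 := by nlinarith
  have hne : π ^ 2 - 4 * x ^ 2 ≠ 0 := by linarith
  have hM : ∀ k : ℕ, (2 * (k : ℝ) + 1) ^ 2 = 1 ∨ 3 < (2 * (k : ℝ) + 1) ^ 2 := by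
    intro k
    rcases Nat.eq_zero_or_pos k with rfl | hk
    · simp
    · right
      have : (1 : ℝ) ≤ k := by exact_mod_cast hk
      nlinarith
  have hL := ((hasSum_odd_four.add (((hasSum_odd_six.mul_left 2).sub
    (hasSum_odd_four.mul_left 2)).mul_left (4 * x ^ 2 / π ^ 2))).div_const
      ((π ^ 2 - 4 * x ^ 2) ^ 2)).mul_left (64 * x ^ 3)
  have hlt := hasSum_lt (i := 1) ?_ ?_ hL (hasSum_main hx0 hx)
  · refine lt_of_eq_of_lt ?_ hlt
    field_simp
    ring
  · intro k
    have := (term_bound hX hXP (hM k)).1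
    simp only [← pow_mul, Nat.reduceMul] at this
    have h := mul_le_mul_of_nonneg_left this (show 0 ≤ 64 * x ^ 3 by positivity)
    exact h.trans_eq (mul_one_div _ _)
  · have := (term_bound hX hXP (hM 1)).2 (by norm_num)
    simp only [← pow_mul, Nat.reduceMul] at this
    have h := mul_lt_mul_of_pos_left this (show 0 < 64 * x ^ 3 by positivity)
    exact h.trans_eq (mul_one_div _ _)
end

section
/- For every real x with 0 < x < π/2, the inequality x/(cos x)² − tan x < ((2π⁴/3)·x³ + (256/π² − 8π²/3)·x⁵) / (π² − 4x²)² holds. -/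
/-!
Expanding `tan` in partial fractions over its poles,
`tan y / y = ∑ₘ 8 / ((2m+1)²π² - 4y²)` (`hasSum_tan_div`), and differentiating term by term gives
`x sec² x - tan x = x² (tan x / x)' = 64 x³ ∑ₘ 1 / ((2m+1)²π² - 4x²)²`.
Only the upper bound `≤` is needed, and it follows from comparing difference quotients from the
left, without interchanging the limit and the sum (`sec_sq_sub_tan_le`).

Put `v = 4x²/π²`, so `0 < v < 1`. After multiplication by `(π² - 4x²)²` the `m`-th summand becomes
`((1 - v) / (k² - v))²` with `k = 2m + 1`. It equals `1` for `k = 1`, and is less than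
`(1 - v) / k⁴` for `k ≥ 3`, because `(k² - v)² - (1 - v) k⁴ = v (k⁴ - 2k² + v) > 0`.
Since `∑ 1 / (2m+1)⁴ = π⁴/96`, the sum is less than `v + (1 - v) π⁴/96`; multiplied by `64 x³`,
this is exactly the numerator on the right-hand side. In other words, the numerator interpolates
the exact sum linearly in `x²` between `x = 0` and `x = π/2`.
-/

open Real

open Filter Topology

lemma hasSum_of_eq {f g : ℕ → ℝ} {a : ℝ} (h : ∀ m, f m = g m) (hg : HasSum g a) : HasSum f a :=
  funext h ▸ hg

/-- The Mittag-Leffler expansion of the cotangent, for a real argument. -/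
lemma hasSum_cot (w : ℝ) (h0 : 0 < w) (h1 : w < 1) :
    HasSum (fun n : ℕ => 1 / (w - (n + 1)) + 1 / (w + (n + 1))) (π * cot (π * w) - 1 / w) := by
  have hz : (w : ℂ) ∈ Complex.integerComplement := by
    rintro ⟨n, hn⟩
    have hn' : (n : ℝ) = w := by exact_mod_cast hn
    rw [← hn'] at h0 h1
    norm_cast at h0 h1
    omega
  have h := (summable_cotTerm hz).hasSum
  have h2 : ∑' n : ℕ, cotTerm (w : ℂ) n = π * Complex.cot (π * w) - 1 / w :=
    (cot_series_rep' hz).symm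
  rw [h2] at h
  apply Complex.hasSum_ofReal.mp
  convert h using 1
  · ext n
    simp [cotTerm]
  · push_cast
    rfl

/-- The expansion of `tan` results from `2 cot 2θ = cot θ - tan θ`: the even-indexed poles
of `cot 2θ` are those of `cot θ`, and the odd-indexed ones are those of `tan θ`. -/
lemma hasSum_tan_div (x : ℝ) (hx0 : 0 < x) (hx : x < π / 2) :
    HasSum (fun m : ℕ => 8 / ((2 * (m : ℝ) + 1) ^ 2 * π ^ 2 - 4 * x ^ 2)) (tan x / x) := by
  have hpi := pi_pos
  obtain ⟨w, rfl⟩ : ∃ w, x = π * w := ⟨x / π, by field_simp⟩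
  have hw0 : 0 < w := by
    by_contra! h
    nlinarith
  have hw : w < 1 / 2 := by
    by_contra! h
    nlinarith
  have hA := hasSum_cot w hw0 (by linarith)
  have hB := hasSum_cot (2 * w) (by linarith) (by linarith)
  have hpos : ∀ m : ℕ, 0 < (2 * (m : ℝ) + 1) ^ 2 - 4 * w ^ 2 := fun m => by
    have : (0 : ℝ) ≤ m := m.cast_nonneg
    nlinarith
  have hodd : HasSum (fun m : ℕ => 1 / (2 * w - (((2 * m + 1 : ℕ) : ℝ) + 1))
      + 1 / (2 * w + (((2 * m + 1 : ℕ) : ℝ) + 1))) ((π * cot (π * w) - 1 / w) / 2) := by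
    refine hasSum_of_eq (fun m => ?_) (hA.div_const 2)
    have h : (0 : ℝ) ≤ m := m.cast_nonneg
    have e1 : 2 * w - (((2 * m + 1 : ℕ) : ℝ) + 1) = 2 * (w - (m + 1)) := by push_cast; ring
    have e2 : 2 * w + (((2 * m + 1 : ℕ) : ℝ) + 1) = 2 * (w + (m + 1)) := by push_cast; ring
    have h1 : w - (m + 1) ≠ 0 := by linarith
    have h2 : w + (m + 1) ≠ 0 := by positivity
    rw [e1, e2]
    field_simp
  have hev := hB.summable.comp_injective (i := fun m : ℕ => 2 * m)
    (fun a b h => by simpa using h)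
  have htot := (HasSum.even_add_odd (f := fun n : ℕ => 1 / (2 * w - ((n : ℝ) + 1))
    + 1 / (2 * w + ((n : ℝ) + 1))) hev.hasSum hodd).unique hB
  have hs := hev.hasSum
  rw [eq_sub_of_add_eq htot] at hs
  have hs' := hs.mul_left (-2 / (π ^ 2 * w))
  have hsin : sin (π * w) ≠ 0 := (sin_pos_of_pos_of_lt_pi hx0 (by linarith)).ne'
  have hcos : cos (π * w) ≠ 0 := (cos_pos_of_mem_Ioo ⟨by linarith, hx⟩).ne'
  rw [show tan (π * w) / (π * w) = -2 / (π ^ 2 * w) *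
    (π * cot (π * (2 * w)) - 1 / (2 * w) - (π * cot (π * w) - 1 / w) / 2) from ?_]
  · refine hasSum_of_eq (fun m => ?_) hs'
    have h1 := hpos m
    have h : (0 : ℝ) ≤ m := m.cast_nonneg
    have h2 : 2 * w - (2 * m + 1) ≠ 0 := by linarith
    have h3 : 2 * w + (2 * m + 1) ≠ 0 := by positivity
    have e : (2 * (m : ℝ) + 1) ^ 2 * π ^ 2 - 4 * (π * w) ^ 2
      = -(π ^ 2 * ((2 * w - (2 * m + 1)) * (2 * w + (2 * m + 1)))) := by ring
    rw [e]
    simp only [Function.comp]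
    push_cast
    field_simp
    ring
  · rw [Real.cot_eq_cos_div_sin, Real.cot_eq_cos_div_sin, tan_eq_sin_div_cos,
      show π * (2 * w) = 2 * (π * w) by ring, sin_two_mul, cos_two_mul']
    field_simp
    ring

lemma hasSum_odd_fourth :
    HasSum (fun m : ℕ => 1 / (2 * (m : ℝ) + 1) ^ 4) (π ^ 4 / 96) := by
  have h4 := hasSum_zeta_four
  have hev : HasSum (fun m : ℕ => (1 : ℝ) / ((2 * m : ℕ) : ℝ) ^ 4) (1 / 16 * (π ^ 4 / 90)) := by
    refine hasSum_of_eq (fun m => ?_) (h4.mul_left (1 / 16))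
    push_cast
    rw [mul_pow, one_div_mul_one_div]
    norm_num
  have hodd := h4.summable.comp_injective (i := fun m : ℕ => 2 * m + 1)
    (fun a b h => by simpa using h)
  have htot := (HasSum.even_add_odd (f := fun n : ℕ => (1 : ℝ) / (n : ℝ) ^ 4)
    hev hodd.hasSum).unique h4
  have hs := hodd.hasSum
  rw [show ∑' b, ((fun n : ℕ => (1 : ℝ) / (n : ℝ) ^ 4) ∘ fun m : ℕ => 2 * m + 1) b = π ^ 4 / 96 by
    linarith] at hs
  refine hasSum_of_eq (fun m => ?_) hs
  simp

/-- A bound for `x² (tan x / x)'` by the termwise derivative of the partial fraction series.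
Each summand `8 / (a - 4y²)` is convex in `y²`, so
`tan y / y - (∑ 32 / (a - 4x²)²) y²` is at least as large at any `y < x` as at `x`, which forces its
derivative at `x` to be nonpositive. -/
lemma sec_sq_sub_tan_le (x S : ℝ) (hx0 : 0 < x) (hx : x < π / 2)
    (hS : HasSum (fun m : ℕ => 1 / ((2 * (m : ℝ) + 1) ^ 2 * π ^ 2 - 4 * x ^ 2) ^ 2) S) :
    x / cos x ^ 2 - tan x ≤ 64 * x ^ 3 * S := by
  have hcos : cos x ≠ 0 := (cos_pos_of_mem_Ioo ⟨by linarith, hx⟩).ne'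
  have key : ∀ y, 0 < y → y < x → tan x / x - 32 * S * x ^ 2 ≤ tan y / y - 32 * S * y ^ 2 := by
    intro y hy0 hyx
    have h := hasSum_le (fun m => ?_)
      ((hasSum_tan_div x hx0 hx).sub (hasSum_tan_div y hy0 (by linarith)))
      (hS.mul_left (32 * (x ^ 2 - y ^ 2)))
    · linarith
    · have hm : (0 : ℝ) ≤ m := m.cast_nonneg
      have ha : π ^ 2 ≤ (2 * (m : ℝ) + 1) ^ 2 * π ^ 2 :=
        le_mul_of_one_le_left (by positivity) (by nlinarith)
      have hA : 0 < (2 * (m : ℝ) + 1) ^ 2 * π ^ 2 - 4 * x ^ 2 := by nlinarith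
      have hyx2 : 0 < x ^ 2 - y ^ 2 := by nlinarith
      have hBA : (2 * (m : ℝ) + 1) ^ 2 * π ^ 2 - 4 * y ^ 2
        = ((2 * (m : ℝ) + 1) ^ 2 * π ^ 2 - 4 * x ^ 2) + 4 * (x ^ 2 - y ^ 2) := by ring
      rw [hBA]
      generalize (2 * (m : ℝ) + 1) ^ 2 * π ^ 2 - 4 * x ^ 2 = A at hA ⊢
      generalize x ^ 2 - y ^ 2 = d at hyx2 ⊢
      have e : 8 / A - 8 / (A + 4 * d) = 32 * d * (1 / (A * (A + 4 * d))) := by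
        field_simp
        ring
      rw [e]
      gcongr
      nlinarith
  have hd : HasDerivAt (fun y => tan y / y - 32 * S * y ^ 2)
      ((1 / cos x ^ 2 * x - tan x * 1) / x ^ 2 - 32 * S * (2 * x)) x := by
    have h1 := (hasDerivAt_tan hcos).div (hasDerivAt_id x) hx0.ne'
    have h2 := ((hasDerivAt_id x).pow 2).const_mul (32 * S)
    exact (h1.sub h2).congr_deriv (by simp)
  have hle : (1 / cos x ^ 2 * x - tan x * 1) / x ^ 2 - 32 * S * (2 * x) ≤ 0 := by
    have ht := (hasDerivWithinAt_iff_tendsto_slope' (s := Set.Iio x) (by simp)).mp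
      hd.hasDerivWithinAt
    refine le_of_tendsto ht ?_
    filter_upwards [Ioo_mem_nhdsLT hx0] with y hy
    rw [slope_def_field]
    exact div_nonpos_of_nonneg_of_nonpos (sub_nonneg.mpr (key y hy.1 hy.2)) (by linarith [hy.2])
  have hx2 : 0 < x ^ 2 := by positivity
  have := (div_le_iff₀ hx2).mp (sub_nonpos.mp hle)
  have e : 1 / cos x ^ 2 * x = x / cos x ^ 2 := by ring
  rw [e] at this
  nlinarith

theorem stmt_19 (x : ℝ) (hx0 : 0 < x) (hx : x < π / 2) :
    x / cos x ^ 2 - tan x <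
      ((2 * π ^ 4 / 3) * x ^ 3 + (256 / π ^ 2 - 8 * π ^ 2 / 3) * x ^ 5) /
        (π ^ 2 - 4 * x ^ 2) ^ 2 := by
  have hpi := pi_pos
  obtain ⟨v, hv⟩ : ∃ v, v = 4 * x ^ 2 / π ^ 2 := ⟨_, rfl⟩
  have hxv : 4 * x ^ 2 = v * π ^ 2 := by
    rw [hv]
    field_simp
  have hv0 : 0 < v := by
    rw [hv]
    positivity
  have hv1 : v < 1 := by
    rw [hv, div_lt_one (by positivity)]
    nlinarith
  have hD : π ^ 2 - 4 * x ^ 2 = (1 - v) * π ^ 2 := by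
    rw [hxv]
    ring
  have hDpos : 0 < π ^ 2 - 4 * x ^ 2 := by
    rw [hD]
    exact mul_pos (by linarith) (by positivity)
  have hterm : ∀ m : ℕ, 1 / ((2 * (m : ℝ) + 1) ^ 2 * π ^ 2 - 4 * x ^ 2) ^ 2
      = 1 / (π ^ 2 - 4 * x ^ 2) ^ 2 * ((1 - v) ^ 2 / ((2 * (m : ℝ) + 1) ^ 2 - v) ^ 2) := by
    intro m
    have hm : (0 : ℝ) ≤ m := m.cast_nonneg
    have h1 : (2 * (m : ℝ) + 1) ^ 2 - v ≠ 0 := by nlinarith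
    have h2 : 1 - v ≠ 0 := by linarith
    rw [hD, hxv, ← sub_mul]
    field_simp
  have hlt : ∀ m : ℕ, m ≠ 0 → (1 - v) ^ 2 / ((2 * (m : ℝ) + 1) ^ 2 - v) ^ 2
      < (1 - v) * (1 / (2 * (m : ℝ) + 1) ^ 4) := by
    intro m hm
    have hm1 : (1 : ℝ) ≤ m := by exact_mod_cast Nat.one_le_iff_ne_zero.mpr hm
    have hk : 9 ≤ (2 * (m : ℝ) + 1) ^ 2 := by nlinarith
    rw [show (2 * (m : ℝ) + 1) ^ 4 = ((2 * (m : ℝ) + 1) ^ 2) ^ 2 by ring]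
    generalize (2 * (m : ℝ) + 1) ^ 2 = q at hk ⊢
    have hqv : 0 < q - v := by linarith
    rw [mul_one_div, div_lt_div_iff₀ (by positivity) (by positivity)]
    have h1 : 0 < v * (q * (q - 2) + v) := by
      have : 0 < q * (q - 2) := mul_pos (by linarith) (by linarith)
      positivity
    have h2 : 0 < (1 - v) * (v * (q * (q - 2) + v)) := mul_pos (by linarith) h1
    nlinarith
  have hg : HasSum (fun m : ℕ => (1 - v) * (1 / (2 * (m : ℝ) + 1) ^ 4) + if m = 0 then v else 0)
      ((1 - v) * (π ^ 4 / 96) + v) :=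
    (hasSum_odd_fourth.mul_left (1 - v)).add (hasSum_ite_eq 0 v)
  have hle : ∀ m : ℕ, (1 - v) ^ 2 / ((2 * (m : ℝ) + 1) ^ 2 - v) ^ 2
      ≤ (1 - v) * (1 / (2 * (m : ℝ) + 1) ^ 4) + if m = 0 then v else 0 := by
    intro m
    by_cases hm : m = 0
    · subst hm
      have h2 : 1 - v ≠ 0 := by linarith
      simp [h2]
    · simpa [hm] using (hlt m hm).le
  have hf : Summable (fun m : ℕ => (1 - v) ^ 2 / ((2 * (m : ℝ) + 1) ^ 2 - v) ^ 2) :=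
    Summable.of_nonneg_of_le (fun m => by positivity) hle hg.summable
  have hsum : ∑' m : ℕ, (1 - v) ^ 2 / ((2 * (m : ℝ) + 1) ^ 2 - v) ^ 2
      < (1 - v) * (π ^ 4 / 96) + v := by
    refine hasSum_lt hle (i := 1) ?_ hf.hasSum hg
    simpa using hlt 1 one_ne_zero
  have hS := hf.hasSum.mul_left (1 / (π ^ 2 - 4 * x ^ 2) ^ 2)
  simp_rw [← hterm] at hS
  refine (sec_sq_sub_tan_le x _ hx0 hx hS).trans_lt ?_
  have hnum : (2 * π ^ 4 / 3) * x ^ 3 + (256 / π ^ 2 - 8 * π ^ 2 / 3) * x ^ 5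
      = 64 * x ^ 3 * ((1 - v) * (π ^ 4 / 96) + v) := by
    rw [hv]
    field_simp
    ring
  rw [hnum, one_div_mul_eq_div, ← mul_div_assoc]
  gcongr
end
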